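/- (Cauchy–Schwarz inequality for the Bopp–Podolsky energy.) Let K : ℝ³ → ℝ be defined by K(x) = (1 - exp(-‖x‖))/‖x‖ for x ≠ 0 and K(0) = 1, and for measurable f, g : ℝ³ → ℝ set V(f,g) = ∫_{ℝ³}∫_{ℝ³} K(x-y) f(x) g(y) dx dy. If f, g : ℝ³ → ℝ are measurable with V(|f|,|f|) < ∞ and V(|g|,|g|) < ∞, then V(|f|,|g|) < ∞ (so V(f,g) is a well-defined real number) and V(f,g)² ≤ V(f,f) · V(g,g). -/

import Mathlib

open MeasureTheory Real
open scoped ENNReal Classical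

noncomputable section

abbrev E3 := EuclideanSpace ℝ (Fin 3)

/-- Bopp–Podolsky kernel with `a = 1`. -/
def K1 (x : E3) : ℝ := if x = 0 then 1 else (1 - Real.exp (-‖x‖)) / ‖x‖

/-- Laplacian of `f` at `x`: sum of second derivatives along the coordinate directions. -/
def lap (f : E3 → ℝ) (x : E3) : ℝ :=
  ∑ i : Fin 3, fderiv ℝ (fun y => fderiv ℝ f y (EuclideanSpace.single i 1)) x
    (EuclideanSpace.single i 1)

/-- Bopp–Podolsky energy as an iterated lower integral, valued in `[0,∞]`. -/
def Vlin (f g : E3 → ℝ) : ℝ≥0∞ :=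
  ∫⁻ x, ∫⁻ y, ENNReal.ofReal (K1 (x - y) * f x * g y)

/-- Bopp–Podolsky energy as an iterated Bochner integral. -/
def Vr (f g : E3 → ℝ) : ℝ := ∫ x, ∫ y, K1 (x - y) * f x * g y

/-- `G` is the weak gradient of `u`. -/
def IsWeakGradient (u : E3 → ℝ) (G : E3 → E3) : Prop :=
  ∀ φ : E3 → ℝ, ContDiff ℝ (⊤ : ℕ∞) φ → HasCompactSupport φ → ∀ i : Fin 3,
    ∫ x, u x * fderiv ℝ φ x (EuclideanSpace.single i 1) = -∫ x, G x i * φ x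

/-- `h` is the weak Laplacian of `u`. -/
def IsWeakLaplacian (u : E3 → ℝ) (h : E3 → ℝ) : Prop :=
  ∀ φ : E3 → ℝ, ContDiff ℝ (⊤ : ℕ∞) φ → HasCompactSupport φ →
    ∫ x, u x * lap φ x = ∫ x, h x * φ x


open Filter Topology Set in
theorem bp_E_top : Tendsto (fun u : ℝ => ∫ v in (0:ℝ)..u, Real.exp (-v^2)) atTop (𝓝 (√π / 2)) := by
  have h1 : IntegrableOn (fun v : ℝ => Real.exp (-v^2)) (Ioi 0) := by
    have := (integrable_exp_neg_mul_sq (b := 1) one_pos).integrableOn (s := Ioi 0)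
    simpa using this
  have h2 := intervalIntegral_tendsto_integral_Ioi (μ := volume) 0 h1 tendsto_id
  have h3 := integral_gaussian_Ioi 1
  simp only [div_one, neg_mul, one_mul] at h3
  rw [h3] at h2
  exact h2

open Filter Topology Set in
theorem bp_E_bot : Tendsto (fun u : ℝ => ∫ v in (0:ℝ)..u, Real.exp (-v^2)) atBot (𝓝 (-(√π / 2))) := by
  have h := (bp_E_top.comp tendsto_neg_atBot_atTop).neg
  refine h.congr fun u => ?_
  have := intervalIntegral.integral_comp_neg (a := 0) (b := u) (fun v : ℝ => Real.exp (-v^2))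
  simp only [even_two, Even.neg_pow, neg_zero] at this
  simp only [Function.comp]
  rw [this, intervalIntegral.integral_symm, neg_neg]

open Filter Topology Set in
theorem bp_scalar (r : ℝ) (hr : 0 < r) :
    IntegrableOn (fun s : ℝ => Real.exp (-(r*s)^2 - 1/(4*s^2))) (Ioi 0) ∧
    ∫ s in Ioi (0:ℝ), Real.exp (-(r*s)^2 - 1/(4*s^2)) = √π / 2 / r * Real.exp (-r) := by
  set E : ℝ → ℝ := fun u => ∫ v in (0:ℝ)..u, Real.exp (-v^2) with hE
  have hEd : ∀ u, HasDerivAt E (Real.exp (-u^2)) u := fun u => by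
    have hc : Continuous (fun v : ℝ => Real.exp (-v^2)) := by fun_prop
    exact intervalIntegral.integral_hasDerivAt_right (hc.intervalIntegrable _ _)
      (hc.stronglyMeasurableAtFilter _ _) hc.continuousAt
  set A : ℝ → ℝ := fun s => (1/(2*r)) * (Real.exp (-r) * E (r*s - 1/2 * s⁻¹)
    + Real.exp r * E (r*s + 1/2 * s⁻¹)) with hA
  set l0 : ℝ := (1/(2*r)) * (Real.exp (-r) * (-(√π/2)) + Real.exp r * (√π/2)) with hl0
  set l1 : ℝ := (1/(2*r)) * (Real.exp (-r) * (√π/2) + Real.exp r * (√π/2)) with hl1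
  have hd : ∀ s ∈ Ioi (0:ℝ), HasDerivAt A (Real.exp (-(r*s)^2 - 1/(4*s^2))) s := by
    intro s hs
    have hs0 : s ≠ 0 := (ne_of_gt hs)
    have hi := (hasDerivAt_inv hs0).const_mul (1/2:ℝ)
    have hm : HasDerivAt (fun s : ℝ => r * s) r s := by
      simpa using (hasDerivAt_id s).const_mul r
    have e1 := ((hEd (r*s - 1/2*s⁻¹)).comp s (hm.sub hi)).const_mul (Real.exp (-r))
    have e2 := ((hEd (r*s + 1/2*s⁻¹)).comp s (hm.add hi)).const_mul (Real.exp r)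
    have e3 := (e1.add e2).const_mul (1/(2*r))
    refine e3.congr_deriv ?_
    have k1 : Real.exp (-(r*s - 1/2*s⁻¹)^2) = Real.exp (-(r*s)^2 - 1/(4*s^2)) * Real.exp r := by
      rw [← Real.exp_add]; congr 1; field_simp; ring
    have k2 : Real.exp (-(r*s + 1/2*s⁻¹)^2) = Real.exp (-(r*s)^2 - 1/(4*s^2)) * Real.exp (-r) := by
      rw [← Real.exp_add]; congr 1; field_simp; ring
    rw [k1, k2, Real.exp_neg r]
    have := Real.exp_ne_zero r
    field_simp
    ring
  have hinv0 : Tendsto (fun s : ℝ => 1/2 * s⁻¹) (𝓝[>] 0) atTop :=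
    tendsto_inv_nhdsGT_zero.const_mul_atTop (by norm_num)
  have hm0 : Tendsto (fun s : ℝ => r * s) (𝓝[>] 0) (𝓝 0) := by
    have : Tendsto (fun s : ℝ => r * s) (𝓝 0) (𝓝 (r*0)) := (continuous_const_mul r).tendsto 0
    rw [mul_zero] at this
    exact this.mono_left nhdsWithin_le_nhds
  have hinv1 : Tendsto (fun s : ℝ => 1/2 * s⁻¹) atTop (𝓝 0) := by
    simpa using tendsto_inv_atTop_zero.const_mul (1/2:ℝ)
  have hm1 : Tendsto (fun s : ℝ => r * s) atTop atTop := tendsto_id.const_mul_atTop hr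
  have t0 : Tendsto A (𝓝[>] 0) (𝓝 l0) := by
    refine Tendsto.const_mul _ (Tendsto.add (Tendsto.const_mul _ ?_) (Tendsto.const_mul _ ?_))
    · refine bp_E_bot.comp ?_
      have := hm0.add_atBot (tendsto_neg_atTop_atBot.comp hinv0)
      exact this.congr fun s => by simp [sub_eq_add_neg]
    · exact bp_E_top.comp (hm0.add_atTop hinv0)
  have t1 : Tendsto A atTop (𝓝 l1) := by
    refine Tendsto.const_mul _ (Tendsto.add (Tendsto.const_mul _ ?_) (Tendsto.const_mul _ ?_))
    · refine bp_E_top.comp ?_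
      have := hm1.atTop_add hinv1.neg
      exact this.congr fun s => by simp [sub_eq_add_neg]
    · exact bp_E_top.comp (hm1.atTop_add hinv1)
  have hcont : ContinuousWithinAt (Function.update A 0 l0) (Ici 0) 0 := by
    rw [continuousWithinAt_update_same]
    have : Ici (0:ℝ) \ {0} = Ioi 0 := by simp
    rw [this]; exact t0
  have hd' : ∀ s ∈ Ioi (0:ℝ), HasDerivAt (Function.update A 0 l0)
      (Real.exp (-(r*s)^2 - 1/(4*s^2))) s := by
    intro s hs
    refine (hd s hs).congr_of_eventuallyEq ?_
    filter_upwards [isOpen_Ioi.mem_nhds hs] with t ht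
    exact Function.update_of_ne (ne_of_gt ht) _ _
  have t1' : Tendsto (Function.update A 0 l0) atTop (𝓝 l1) := by
    refine t1.congr' ?_
    filter_upwards [eventually_gt_atTop 0] with t ht
    exact (Function.update_of_ne (ne_of_gt ht) _ _).symm
  refine ⟨integrableOn_Ioi_deriv_of_nonneg hcont hd' (fun _ _ => (Real.exp_pos _).le) t1', ?_⟩
  rw [integral_Ioi_of_hasDerivAt_of_nonneg hcont hd' (fun _ _ => (Real.exp_pos _).le) t1']
  simp only [Function.update_self, hl0, hl1]
  field_simp
  ring

/-- Scalar weight. -/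
def bpw (s : ℝ) : ℝ := 2 / √π * (1 - Real.exp (-(1/(4*s^2))))

theorem bpw_nonneg (s : ℝ) : 0 ≤ bpw s := by
  unfold bpw
  have : Real.exp (-(1/(4*s^2))) ≤ 1 := Real.exp_le_one_iff.2 (by
    have : 0 ≤ 1/(4*s^2) := by positivity
    linarith)
  have : 0 ≤ 1 - Real.exp (-(1/(4*s^2))) := by linarith
  positivity

theorem bpw_meas : Measurable bpw := by unfold bpw; fun_prop

open Set in
theorem bp_kernel (r : ℝ) (hr : 0 < r) :
    ∫⁻ s in Ioi (0:ℝ), ENNReal.ofReal (bpw s * Real.exp (-(r*s)^2)) =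
      ENNReal.ofReal ((1 - Real.exp (-r)) / r) := by
  obtain ⟨i2, v2⟩ := bp_scalar r hr
  have i1 : IntegrableOn (fun s : ℝ => Real.exp (-(r*s)^2)) (Ioi 0) := by
    have := (integrable_exp_neg_mul_sq (b := r^2) (by positivity)).integrableOn (s := Ioi 0)
    simpa [mul_pow] using this
  have v1 : ∫ s in Ioi (0:ℝ), Real.exp (-(r*s)^2) = √π / 2 / r := by
    have := integral_gaussian_Ioi (r^2)
    rw [Real.sqrt_div Real.pi_pos.le, Real.sqrt_sq hr.le] at this
    simp only [mul_pow, ← neg_mul]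
    rw [this]; ring
  have he : ∀ s : ℝ, bpw s * Real.exp (-(r*s)^2) =
      2 / √π * (Real.exp (-(r*s)^2) - Real.exp (-(r*s)^2 - 1/(4*s^2))) := by
    intro s
    rw [bpw, sub_eq_add_neg (-(r*s)^2), Real.exp_add]; ring
  rw [← ofReal_integral_eq_lintegral_ofReal]
  · congr 1
    simp_rw [he]
    rw [integral_const_mul, integral_sub i1 i2, v1, v2]
    have : √π ≠ 0 := by positivity
    field_simp
  · simp_rw [he]
    exact (i1.sub i2).const_mul _
  · exact Filter.Eventually.of_forall fun s => mul_nonneg (bpw_nonneg s) (Real.exp_pos _).le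

/-- Gaussian normalisation. -/
def bpc (s : ℝ) : ℝ := (π / (4*s^2)) ^ ((Module.finrank ℝ E3 : ℝ) / 2)

/-- Feature map. -/
def bpPhi (x : E3) (w : ℝ × E3) : ℝ :=
  √(bpw w.1 / bpc w.1) * Real.exp (-(2 * w.1^2 * ‖x - w.2‖^2))

/-- Feature measure. -/
def bpmu : Measure (ℝ × E3) := (volume.restrict (Set.Ioi (0:ℝ))).prod volume

instance : SFinite bpmu := by unfold bpmu; infer_instance

theorem bpPhi_nonneg (x : E3) (w : ℝ × E3) : 0 ≤ bpPhi x w := by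
  unfold bpPhi; positivity

theorem bpPhi_meas : Measurable (Function.uncurry bpPhi) := by
  have := bpw_meas
  unfold Function.uncurry bpPhi bpc
  fun_prop

theorem bpPhi_meas2 {α : Type*} [MeasurableSpace α] {a : α → E3} {b : α → ℝ × E3}
    (ha : Measurable a) (hb : Measurable b) : Measurable (fun p => bpPhi (a p) (b p)) := by
  have h := bpPhi_meas.comp (ha.prodMk hb)
  simpa only [Function.comp_def, Function.uncurry] using h

theorem bpPhi_measl (x : E3) : Measurable (bpPhi x) := bpPhi_meas2 measurable_const measurable_id

theorem bpPhi_measr (w : ℝ × E3) : Measurable (fun x => bpPhi x w) :=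
  bpPhi_meas2 measurable_id measurable_const

theorem bp_gauss (s : ℝ) (hs : 0 < s) (m : E3) :
    ∫⁻ z : E3, ENNReal.ofReal (Real.exp (-(4*s^2*‖m - z‖^2))) = ENNReal.ofReal (bpc s) := by
  have h := GaussianFourier.integral_rexp_neg_mul_sq_norm (V := E3) (b := 4*s^2) (by positivity)
  have hp : 0 < bpc s := by unfold bpc; positivity
  have hi : Integrable (fun v : E3 => Real.exp (-(4*s^2)*‖v‖^2)) := by
    by_contra hn
    rw [integral_undef hn] at h
    unfold bpc at hp
    linarith
  rw [lintegral_sub_left_eq_self (fun z : E3 => ENNReal.ofReal (Real.exp (-(4*s^2*‖z‖^2)))) m,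
    bpc, ← h, ofReal_integral_eq_lintegral_ofReal hi
      (Filter.Eventually.of_forall fun _ => (Real.exp_pos _).le)]
  simp only [neg_mul]

theorem bp_par (x y z : E3) :
    2 * ‖x - z‖^2 + 2 * ‖y - z‖^2 = ‖x - y‖^2 + 4 * ‖(1/2:ℝ) • (x + y) - z‖^2 := by
  have h := parallelogram_law_with_norm ℝ (x - z) (y - z)
  have e1 : x - z - (y - z) = x - y := by abel
  have e2 : x - z + (y - z) = (2:ℝ) • ((1/2:ℝ) • (x + y) - z) := by
    rw [smul_sub, smul_smul, two_smul ℝ z]; norm_num; abel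
  rw [e1, e2, norm_smul] at h
  norm_num at h
  norm_num
  nlinarith

theorem bp_feature (x y : E3) (hxy : x ≠ y) :
    ∫⁻ w, ENNReal.ofReal (bpPhi x w * bpPhi y w) ∂bpmu = ENNReal.ofReal (K1 (x - y)) := by
  have mx := bpPhi_measl x
  have my := bpPhi_measl y
  have hne : x - y ≠ 0 := sub_ne_zero.2 hxy
  rw [bpmu, lintegral_prod _ (by fun_prop), K1, if_neg hne, ← bp_kernel _ (norm_pos_iff.2 hne)]
  refine setLIntegral_congr_fun measurableSet_Ioi fun s hs => ?_
  have hs : 0 < s := hs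
  have hp : 0 < bpc s := by unfold bpc; positivity
  have e : ∀ z : E3, ENNReal.ofReal (bpPhi x (s,z) * bpPhi y (s,z)) =
      ENNReal.ofReal (bpw s / bpc s * Real.exp (-(‖x - y‖*s)^2)) *
        ENNReal.ofReal (Real.exp (-(4*s^2*‖(1/2:ℝ) • (x + y) - z‖^2))) := by
    intro z
    have h0 : 0 ≤ bpw s / bpc s := div_nonneg (bpw_nonneg s) hp.le
    rw [← ENNReal.ofReal_mul (mul_nonneg h0 (Real.exp_pos _).le)]
    congr 1
    simp only [bpPhi]
    rw [mul_mul_mul_comm, Real.mul_self_sqrt h0, ← Real.exp_add, mul_assoc (bpw s / bpc s), ← Real.exp_add]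
    congr 2
    linear_combination (-s^2) * bp_par x y z
  simp only [e]
  rw [lintegral_const_mul _ (by fun_prop), bp_gauss s hs, ← ENNReal.ofReal_mul
    (mul_nonneg (div_nonneg (bpw_nonneg s) hp.le) (Real.exp_pos _).le)]
  congr 1
  field_simp

attribute [irreducible] bpPhi bpmu

theorem K1_nonneg (x : E3) : 0 ≤ K1 x := by
  unfold K1
  split_ifs
  · norm_num
  · have : Real.exp (-‖x‖) ≤ 1 := Real.exp_le_one_iff.2 (by simp)
    exact div_nonneg (by linarith) (norm_nonneg _)

theorem bp_feature_real (x y : E3) (hxy : x ≠ y) :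
    ∫ w, bpPhi x w * bpPhi y w ∂bpmu = K1 (x - y) := by
  have mx := bpPhi_measl x
  have my := bpPhi_measl y
  rw [integral_eq_lintegral_of_nonneg_ae
    (Filter.Eventually.of_forall fun w => mul_nonneg (bpPhi_nonneg x w) (bpPhi_nonneg y w))
    (by fun_prop), bp_feature x y hxy, ENNReal.toReal_ofReal (K1_nonneg _)]

theorem bp_ae_ne (x : E3) : ∀ᵐ y : E3, x ≠ y := by
  have : ∀ᵐ y : E3, y ≠ x := by simp [ae_iff]
  exact this.mono fun y h => h.symm

/-- Absolute transform. -/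
def bpA (f : E3 → ℝ) (w : ℝ × E3) : ℝ≥0∞ := ∫⁻ x, ENNReal.ofReal (|f x| * bpPhi x w)

theorem bpA_meas (f : E3 → ℝ) (hf : Measurable f) : Measurable (bpA f) := by
  unfold bpA
  apply Measurable.lintegral_prod_left (f := fun x w => ENNReal.ofReal (|f x| * bpPhi x w))
  have := bpPhi_meas
  unfold Function.uncurry at *
  fun_prop

/-- Triple integrand. -/
def bpH (f g : E3 → ℝ) (p : (E3 × E3) × (ℝ × E3)) : ℝ :=
  (f p.1.1 * bpPhi p.1.1 p.2) * (g p.1.2 * bpPhi p.1.2 p.2)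

theorem bpH_meas (f g : E3 → ℝ) (hf : Measurable f) (hg : Measurable g) :
    Measurable (bpH f g) := by
  have h1 : Measurable fun p : (E3 × E3) × (ℝ × E3) => bpPhi p.1.1 p.2 := bpPhi_meas2 (by fun_prop) (by fun_prop)
  have h2 : Measurable fun p : (E3 × E3) × (ℝ × E3) => bpPhi p.1.2 p.2 := bpPhi_meas2 (by fun_prop) (by fun_prop)
  unfold bpH
  fun_prop

theorem bpH_abs_lintegral (f g : E3 → ℝ) (hf : Measurable f) (hg : Measurable g) :
    ∫⁻ p, ‖bpH f g p‖ₑ ∂((volume.prod volume).prod bpmu) =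
      Vlin (fun x => |f x|) (fun x => |g x|) := by
  have hm := bpH_meas f g hf hg
  rw [lintegral_prod _ (by fun_prop), lintegral_prod _ (by fun_prop), Vlin]
  refine lintegral_congr fun x => lintegral_congr_ae ?_
  filter_upwards [bp_ae_ne x] with y hxy
  have mx := bpPhi_measl x
  have my := bpPhi_measl y
  have e : ∀ w, ‖bpH f g ((x,y),w)‖ₑ =
      ENNReal.ofReal (|f x| * |g y|) * ENNReal.ofReal (bpPhi x w * bpPhi y w) := by
    intro w
    rw [← ENNReal.ofReal_mul (by positivity), Real.enorm_eq_ofReal_abs]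
    congr 1
    simp only [bpH, abs_mul, abs_of_nonneg (bpPhi_nonneg _ _)]
    ring
  simp only [e]
  rw [lintegral_const_mul _ (by fun_prop), bp_feature x y hxy,
    ← ENNReal.ofReal_mul (by positivity)]
  congr 1; ring

theorem bpH_abs_lintegral' (f g : E3 → ℝ) (hf : Measurable f) (hg : Measurable g) :
    ∫⁻ p, ‖bpH f g p‖ₑ ∂((volume.prod volume).prod bpmu) = ∫⁻ w, bpA f w * bpA g w ∂bpmu := by
  have hm := bpH_meas f g hf hg
  rw [lintegral_prod_symm _ (by fun_prop)]
  refine lintegral_congr fun w => ?_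
  have mw := bpPhi_measr w
  rw [bpA, bpA, ← lintegral_prod_mul (by fun_prop) (by fun_prop)]
  refine lintegral_congr fun p => ?_
  rw [← ENNReal.ofReal_mul (mul_nonneg (abs_nonneg _) (bpPhi_nonneg _ _)),
    Real.enorm_eq_ofReal_abs]
  simp only [bpH, abs_mul, abs_of_nonneg (bpPhi_nonneg _ _)]

/-- Real transform. -/
def bpF (f : E3 → ℝ) (w : ℝ × E3) : ℝ := ∫ x, f x * bpPhi x w

theorem bp_real (f g : E3 → ℝ) (hf : Measurable f) (hg : Measurable g)
    (h : Vlin (fun x => |f x|) (fun x => |g x|) < ⊤) :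
    Integrable (fun w => bpF f w * bpF g w) bpmu ∧ Vr f g = ∫ w, bpF f w * bpF g w ∂bpmu := by
  have hI : Integrable (bpH f g) ((volume.prod volume).prod bpmu) :=
    ⟨(bpH_meas f g hf hg).aestronglyMeasurable, by
      rw [HasFiniteIntegral, bpH_abs_lintegral f g hf hg]; exact h⟩
  have e : ∀ w, ∫ p, bpH f g (p, w) ∂(volume.prod volume) = bpF f w * bpF g w := fun w =>
    integral_prod_mul (fun x => f x * bpPhi x w) (fun y => g y * bpPhi y w)
  have h2 := hI.integral_prod_right
  simp only [e] at h2
  refine ⟨h2, ?_⟩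
  simp only [← e]
  rw [← integral_integral_swap (f := fun p w => bpH f g (p, w)) hI,
    integral_prod _ hI.integral_prod_left, Vr]
  refine integral_congr_ae (Filter.Eventually.of_forall fun x => integral_congr_ae ?_)
  filter_upwards [bp_ae_ne x] with y hxy
  have e2 : ∀ w, bpH f g ((x,y),w) = (f x * g y) * (bpPhi x w * bpPhi y w) := by
    intro w; simp only [bpH]; ring
  simp only [e2]
  rw [integral_const_mul, bp_feature_real x y hxy]; ring

/-- Cauchy–Schwarz inequality for the Bopp–Podolsky energy: if `V(|f|,|f|) < ∞` and
`V(|g|,|g|) < ∞`, then `V(|f|,|g|) < ∞` and `V(f,g)² ≤ V(f,f) V(g,g)`. -/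
theorem energy_cauchy_schwarz (f g : E3 → ℝ) (hf : Measurable f) (hg : Measurable g)
    (hVf : Vlin (fun x => |f x|) (fun x => |f x|) < ⊤)
    (hVg : Vlin (fun x => |g x|) (fun x => |g x|) < ⊤) :
    Vlin (fun x => |f x|) (fun x => |g x|) < ⊤ ∧
    (Vr f g) ^ 2 ≤ Vr f f * Vr g g := by
  have hfg : Vlin (fun x => |f x|) (fun x => |g x|) < ⊤ := by
    have a1 := bpH_abs_lintegral' f f hf hf
    have a2 := bpH_abs_lintegral' g g hg hg
    rw [bpH_abs_lintegral _ _ hf hf] at a1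
    rw [bpH_abs_lintegral _ _ hg hg] at a2
    rw [← bpH_abs_lintegral _ _ hf hg, bpH_abs_lintegral' _ _ hf hg]
    have := ENNReal.lintegral_mul_le_Lp_mul_Lq bpmu Real.HolderConjugate.two_two
      (bpA_meas f hf).aemeasurable (bpA_meas g hg).aemeasurable
    refine lt_of_le_of_lt this ?_
    simp only [ENNReal.rpow_two, pow_two]
    rw [← a1, ← a2]
    exact ENNReal.mul_lt_top (ENNReal.rpow_lt_top_of_nonneg (by norm_num) hVf.ne)
      (ENNReal.rpow_lt_top_of_nonneg (by norm_num) hVg.ne)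
  refine ⟨hfg, ?_⟩
  obtain ⟨i1, v1⟩ := bp_real f f hf hf hVf
  obtain ⟨i2, v2⟩ := bp_real g g hg hg hVg
  obtain ⟨i3, v3⟩ := bp_real f g hf hg hfg
  have key : ∀ t : ℝ, 0 ≤ Vr f f * (t * t) + (2 * Vr f g) * t + Vr g g := by
    intro t
    have h0 : 0 ≤ ∫ w, (t * bpF f w + bpF g w)^2 ∂bpmu := integral_nonneg fun w => sq_nonneg _
    have e : ∀ w, (t * bpF f w + bpF g w)^2 = (t * t) * (bpF f w * bpF f w) +
        (2 * t) * (bpF f w * bpF g w) + bpF g w * bpF g w := fun w => by ring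
    simp only [e] at h0
    have j1 := i1.const_mul (t * t)
    have j3 := i3.const_mul (2 * t)
    have j4 : Integrable (fun w => (t * t) * (bpF f w * bpF f w) +
        (2 * t) * (bpF f w * bpF g w)) bpmu := j1.add j3
    rw [integral_add j4 i2, integral_add j1 j3, integral_const_mul, integral_const_mul,
      ← v1, ← v2, ← v3] at h0
    linarith
  have := discrim_le_zero key
  unfold discrim at this
  nlinarith
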